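/- Let q ∈ (1,2], let H be an n×n contraction (H*H ≤ I), and let X and Y be n×n positive definite matrices with I ≤ Y ≤ X in the Loewner order, and set γ = Tr(X). Then S_{H,q}(X | Y) ≥ Tr[H* X^{2−q} H · log_q(Y^{−1/2} X Y^{−1/2})] − Tr(X − Y) − γ · log_q(1 + γ^{−1} Tr(I − H H*)). -/

import Mathlib

open Matrix ComplexOrder

/-- Matrix logarithm of a (positive definite) Hermitian matrix, via functional calculus. -/
noncomputable def mlog {n : ℕ} (A : Matrix (Fin n) (Fin n) ℂ) : Matrix (Fin n) (Fin n) ℂ :=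
  cfc Real.log A

/-- Matrix exponential of a Hermitian matrix, via functional calculus. -/
noncomputable def mexp {n : ℕ} (A : Matrix (Fin n) (Fin n) ℂ) : Matrix (Fin n) (Fin n) ℂ :=
  cfc Real.exp A

/-- Real power of a (positive definite) Hermitian matrix, via functional calculus. -/
noncomputable def mpow {n : ℕ} (A : Matrix (Fin n) (Fin n) ℂ) (p : ℝ) : Matrix (Fin n) (Fin n) ℂ :=
  cfc (fun x : ℝ => x ^ p) A

/-- Deformed logarithm `log_q x = (x^(q-1) - 1)/(q-1)`. -/
noncomputable def logq (q x : ℝ) : ℝ := (x ^ (q - 1) - 1) / (q - 1)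

/-- Deformed exponential `exp_q x = (1 + (q-1)x)^(1/(q-1))`, with `exp_1 = exp`. -/
noncomputable def expq (q x : ℝ) : ℝ :=
  if q = 1 then Real.exp x else (1 + (q - 1) * x) ^ (1 / (q - 1))

/-- Deformed logarithm of a positive definite matrix, via functional calculus. -/
noncomputable def mlogq {n : ℕ} (q : ℝ) (A : Matrix (Fin n) (Fin n) ℂ) :
    Matrix (Fin n) (Fin n) ℂ :=
  cfc (logq q) A

/-- Deformed exponential of a Hermitian matrix, via functional calculus. -/
noncomputable def mexpq {m : ℕ} (q : ℝ) (A : Matrix (Fin m) (Fin m) ℂ) :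
    Matrix (Fin m) (Fin m) ℂ :=
  cfc (expq q) A

/-- Real part of the trace. -/
noncomputable def trRe {n : ℕ} (M : Matrix (Fin n) (Fin n) ℂ) : ℝ := (Matrix.trace M).re

/-- The reduced relative entropy `S_H(A | B) = Tr[A log A - H* A H log B - A + B]`. -/
noncomputable def SH {n : ℕ} (H A B : Matrix (Fin n) (Fin n) ℂ) : ℝ :=
  trRe (A * mlog A - Hᴴ * A * H * mlog B - A + B)

/-- The reduced Tsallis relative entropy
`S_{H,q}(A | B) = Tr[A^(2-q) log_q A - H* A^(2-q) H log_q B - A + B]`. -/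
noncomputable def STq {n : ℕ} (H : Matrix (Fin n) (Fin n) ℂ) (q : ℝ)
    (A B : Matrix (Fin n) (Fin n) ℂ) : ℝ :=
  trRe (mpow A (2 - q) * mlogq q A - Hᴴ * mpow A (2 - q) * H * mlogq q B - A + B)

/-!
Put `s = q - 1` and `Z = Y ^ (-1/2) * X * Y ^ (-1/2)`, so that `1 ≤ Z` and `Tr (Y * Z) = Tr X`.
The claim amounts to bounding
`Tr (X ^ (1 - s) * (1 - H * Hᴴ)) + Tr (X ^ (1 - s) * H * (Y ^ s + Z ^ s - 1) * Hᴴ)` by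
`(Tr X) ^ (1 - s) * (Tr (1 - H * Hᴴ) + Tr X) ^ s`. Now `a ^ (1 - s) * b ^ s` is a positive
superposition of parallel sums of `a` and multiples of `b`, and a parallel sum is the minimum over
`e` of `a * e ^ 2 + b * (1 - e) ^ 2`; hence `Tr (A ^ (1 - s) * G * B ^ s * Gᴴ)` can only grow when
`Gᴴ * A * G` and `B` are replaced by their diagonals in an orthonormal basis. In an eigenbasis of
`Y` everything is then scalar, and `y ^ s + z ^ s - 1 ≤ (y * z) ^ s` for `1 ≤ y, z` together with
Hölder's inequality finishes the proof.
-/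

section Scalar

open MeasureTheory

/-- The parallel sum `(a⁻¹ + b⁻¹)⁻¹` of two nonnegative reals, written so that it also takes the
value `0` as soon as one of them vanishes. -/
noncomputable def parallelSum (a b : ℝ) : ℝ := a * b / (a + b)

theorem parallelSum_eq_weighted_sq_add_sq {a b : ℝ} (ha : 0 ≤ a) (hb : 0 ≤ b) :
    parallelSum a b = a * (b / (a + b)) ^ 2 + b * (1 - b / (a + b)) ^ 2 := by
  rcases (add_nonneg ha hb).eq_or_lt' with h | h
  · obtain ⟨rfl, rfl⟩ := (add_eq_zero_iff_of_nonneg ha hb).mp h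
    simp [parallelSum]
  · rw [parallelSum]
    field_simp
    ring

theorem parallelSum_mul_norm_add_sq_le {E : Type*} [SeminormedAddCommGroup E] {a b : ℝ}
    (ha : 0 ≤ a) (hb : 0 ≤ b) (x y : E) :
    parallelSum a b * ‖x + y‖ ^ 2 ≤ a * ‖x‖ ^ 2 + b * ‖y‖ ^ 2 := by
  have hsq : ‖x + y‖ ^ 2 ≤ (‖x‖ + ‖y‖) ^ 2 := by
    gcongr
    exact norm_add_le x y
  rcases (add_nonneg ha hb).eq_or_lt' with h | h
  · obtain ⟨rfl, rfl⟩ := (add_eq_zero_iff_of_nonneg ha hb).mp h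
    simp [parallelSum]
  · calc parallelSum a b * ‖x + y‖ ^ 2 ≤ parallelSum a b * (‖x‖ + ‖y‖) ^ 2 := by
          gcongr
          exact div_nonneg (mul_nonneg ha hb) h.le
      _ ≤ a * ‖x‖ ^ 2 + b * ‖y‖ ^ 2 := by
          rw [parallelSum, div_mul_eq_mul_div, div_le_iff₀ h]
          linarith [sq_nonneg (a * ‖x‖ - b * ‖y‖)]

theorem exists_measure_rpow_mul_rpow_eq_integral_parallelSum {s : ℝ} (hs : s ∈ Set.Ioo 0 1) :
    ∃ μ : Measure ℝ, ∀ a b : ℝ, 0 ≤ a → 0 ≤ b →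
      IntegrableOn (fun t ↦ t ^ (s - 1) * parallelSum a (t⁻¹ * b)) (Set.Ioi 0) μ ∧
        a ^ (1 - s) * b ^ s = ∫ t in Set.Ioi 0, t ^ (s - 1) * parallelSum a (t⁻¹ * b) ∂μ := by
  obtain ⟨μ, hμ⟩ := Real.exists_measure_rpow_eq_integral_rpowIntegrand₀₁ hs
  refine ⟨μ, fun a b ha hb ↦ ?_⟩
  obtain rfl | ha := ha.eq_or_lt
  · simp [parallelSum, Real.zero_rpow (sub_pos.mpr hs.2).ne']
  have hba : 0 ≤ b / a := div_nonneg hb ha.le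
  have integrand_eq : Set.EqOn (fun t ↦ a * Real.rpowIntegrand₀₁ s t (b / a))
      (fun t ↦ t ^ (s - 1) * parallelSum a (t⁻¹ * b)) (Set.Ioi 0) := fun t (ht : 0 < t) ↦ by
    dsimp only
    rw [Real.rpowIntegrand₀₁_eq_pow_div hs ht.le hba, parallelSum]
    field_simp
  have rpow_eq : a ^ (1 - s) * b ^ s = a * (b / a) ^ s := by
    rw [Real.div_rpow hb ha.le, Real.rpow_sub ha, Real.rpow_one]
    ring
  obtain ⟨integrable, integral_eq⟩ := hμ (b / a) hba
  refine ⟨IntegrableOn.congr_fun (integrable.const_mul a) integrand_eq measurableSet_Ioi, ?_⟩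
  rw [rpow_eq, integral_eq, ← integral_const_mul,
    setIntegral_congr_fun measurableSet_Ioi integrand_eq]

theorem sum_rpow_mul_rpow_le_of_sum_parallelSum_le {ι κ : Type*} [Fintype ι] [Fintype κ]
    {a b w : ι → ℝ} {α β : κ → ℝ} {s : ℝ} (hs : s ∈ Set.Ioo 0 1) (ha : ∀ i, 0 ≤ a i)
    (hb : ∀ i, 0 ≤ b i) (hα : ∀ k, 0 ≤ α k) (hβ : ∀ k, 0 ≤ β k)
    (h : ∀ c, 0 ≤ c → ∑ i, parallelSum (a i) (c * b i) * w i ≤ ∑ k, parallelSum (α k) (c * β k)) :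
    ∑ i, a i ^ (1 - s) * b i ^ s * w i ≤ ∑ k, α k ^ (1 - s) * β k ^ s := by
  obtain ⟨μ, hμ⟩ := exists_measure_rpow_mul_rpow_eq_integral_parallelSum hs
  have integrable_left (i) := (hμ _ _ (ha i) (hb i)).1.mul_const (w i)
  have integrable_right (k) := (hμ _ _ (hα k) (hβ k)).1
  calc ∑ i, a i ^ (1 - s) * b i ^ s * w i
      = ∫ t in Set.Ioi 0, ∑ i, t ^ (s - 1) * parallelSum (a i) (t⁻¹ * b i) * w i ∂μ := by
        rw [integral_finsetSum _ fun i _ ↦ integrable_left i]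
        refine Finset.sum_congr rfl fun i _ ↦ ?_
        rw [integral_mul_const, (hμ _ _ (ha i) (hb i)).2]
    _ ≤ ∫ t in Set.Ioi 0, ∑ k, t ^ (s - 1) * parallelSum (α k) (t⁻¹ * β k) ∂μ := by
        refine setIntegral_mono_on (integrable_finsetSum _ fun i _ ↦ integrable_left i)
          (integrable_finsetSum _ fun k _ ↦ integrable_right k) measurableSet_Ioi
          fun t (ht : 0 < t) ↦ ?_
        simp only [mul_assoc, ← Finset.mul_sum]
        exact mul_le_mul_of_nonneg_left (h t⁻¹ (inv_nonneg.mpr ht.le)) (Real.rpow_nonneg ht.le _)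
    _ = ∑ k, α k ^ (1 - s) * β k ^ s := by
        rw [integral_finsetSum _ fun k _ ↦ integrable_right k]
        exact Finset.sum_congr rfl fun k _ ↦ ((hμ _ _ (hα k) (hβ k)).2).symm

theorem sum_rpow_mul_rpow_le {ι : Type*} (t : Finset ι) {a b : ι → ℝ} {s : ℝ}
    (hs : s ∈ Set.Icc 0 1) (ha : ∀ i ∈ t, 0 ≤ a i) (hb : ∀ i ∈ t, 0 ≤ b i) :
    ∑ i ∈ t, a i ^ (1 - s) * b i ^ s ≤ (∑ i ∈ t, a i) ^ (1 - s) * (∑ i ∈ t, b i) ^ s := by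
  obtain rfl | hs0 := hs.1.eq_or_lt
  · simp
  obtain rfl | hs1 := hs.2.eq_or_lt
  · simp
  have holder := Real.inner_le_Lp_mul_Lq_of_nonneg t
    (Real.HolderConjugate.inv_one_sub_inv hs0 hs1).symm
    (fun i hi ↦ Real.rpow_nonneg (ha i hi) (1 - s)) (fun i hi ↦ Real.rpow_nonneg (hb i hi) s)
  have cancel (p : ℝ) (hp : p ≠ 0) (c : ι → ℝ) (hc : ∀ i ∈ t, 0 ≤ c i) :
      ∑ i ∈ t, (c i ^ p) ^ p⁻¹ = ∑ i ∈ t, c i :=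
    Finset.sum_congr rfl fun i hi ↦ Real.rpow_rpow_inv (hc i hi) hp
  simpa only [cancel _ (sub_pos.mpr hs1).ne' a ha, cancel _ hs0.ne' b hb, one_div, inv_inv]
    using holder

theorem rpow_mul_rpow_add_rpow_mul_rpow_le {a b c d s : ℝ} (hs : s ∈ Set.Icc 0 1)
    (ha : 0 ≤ a) (hb : 0 ≤ b) (hc : 0 ≤ c) (hd : 0 ≤ d) :
    a ^ (1 - s) * b ^ s + c ^ (1 - s) * d ^ s ≤ (a + c) ^ (1 - s) * (b + d) ^ s := by
  simpa using sum_rpow_mul_rpow_le Finset.univ (a := ![a, c]) (b := ![b, d]) hs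
    (by simp [Fin.forall_fin_two, ha, hc]) (by simp [Fin.forall_fin_two, hb, hd])

theorem rpow_add_rpow_sub_one_le_mul_rpow {y z s : ℝ} (hy : 1 ≤ y) (hz : 1 ≤ z) (hs : 0 ≤ s) :
    y ^ s + z ^ s - 1 ≤ (y * z) ^ s := by
  rw [Real.mul_rpow (by positivity) (by positivity)]
  nlinarith [Real.one_le_rpow hy hs, Real.one_le_rpow hz hs]

theorem sum_rpow_mul_rpow_add_rpow_sub_one_le {ι : Type*} (t : Finset ι) {a y z : ι → ℝ} {s : ℝ}
    (hs : s ∈ Set.Icc 0 1) (ha : ∀ i ∈ t, 0 ≤ a i) (hy : ∀ i ∈ t, 1 ≤ y i)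
    (hz : ∀ i ∈ t, 1 ≤ z i) :
    ∑ i ∈ t, a i ^ (1 - s) * (y i ^ s + z i ^ s - 1) ≤
      (∑ i ∈ t, a i) ^ (1 - s) * (∑ i ∈ t, y i * z i) ^ s :=
  calc _ ≤ ∑ i ∈ t, a i ^ (1 - s) * (y i * z i) ^ s := by
        gcongr with i hi
        · exact Real.rpow_nonneg (ha i hi) _
        · exact rpow_add_rpow_sub_one_le_mul_rpow (hy i hi) (hz i hi) hs.1
    _ ≤ _ := sum_rpow_mul_rpow_le t hs ha fun i hi ↦
      mul_nonneg (zero_le_one.trans (hy i hi)) (zero_le_one.trans (hz i hi))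

end Scalar

section Pinching

open scoped MatrixOrder

theorem conjTranspose_diagonal_ofReal {𝕜 n : Type*} [RCLike 𝕜] [DecidableEq n] (e : n → ℝ) :
    (diagonal (fun k ↦ (e k : 𝕜)))ᴴ = diagonal (fun k ↦ (e k : 𝕜)) := by
  rw [diagonal_conjTranspose]
  exact congrArg diagonal (funext fun k ↦ RCLike.conj_ofReal (e k))

variable {𝕜 m n : Type*} [RCLike 𝕜] [Fintype m] [Fintype n] [DecidableEq m] [DecidableEq n]

/-- The matrix of `G` with respect to the eigenvector bases of `B` (source) and `A` (target). -/
noncomputable def eigenbasisMatrix {A : Matrix m m 𝕜} {B : Matrix n n 𝕜} (hA : A.IsHermitian)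
    (hB : B.IsHermitian) (G : Matrix m n 𝕜) : Matrix m n 𝕜 :=
  (hA.eigenvectorUnitary : Matrix m m 𝕜)ᴴ * G * (hB.eigenvectorUnitary : Matrix n n 𝕜)

theorem eigenbasisMatrix_add {A : Matrix m m 𝕜} {B : Matrix n n 𝕜} (hA : A.IsHermitian)
    (hB : B.IsHermitian) (G K : Matrix m n 𝕜) :
    eigenbasisMatrix hA hB (G + K) = eigenbasisMatrix hA hB G + eigenbasisMatrix hA hB K := by
  simp only [eigenbasisMatrix, Matrix.mul_add, Matrix.add_mul]

theorem re_trace_diagonal_mul_mul_diagonal_mul_conjTranspose (a : m → ℝ) (b : n → ℝ)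
    (W : Matrix m n 𝕜) :
    RCLike.re (trace (diagonal (fun i ↦ (a i : 𝕜)) * (W * diagonal (fun j ↦ (b j : 𝕜)) * Wᴴ))) =
      ∑ i, ∑ j, a i * b j * ‖W i j‖ ^ 2 := by
  rw [trace, map_sum]
  refine Finset.sum_congr rfl fun i _ ↦ ?_
  rw [diag_apply, diagonal_mul, Matrix.mul_apply, Finset.mul_sum, map_sum]
  refine Finset.sum_congr rfl fun j _ ↦ ?_
  rw [mul_diagonal, conjTranspose_apply, mul_right_comm, RCLike.star_def, RCLike.mul_conj,
    RCLike.re_ofReal_mul, RCLike.re_mul_ofReal, ← RCLike.ofReal_pow, RCLike.ofReal_re]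
  ring

theorem re_trace_cfc_mul_mul_cfc_mul_conjTranspose {A : Matrix m m 𝕜} {B : Matrix n n 𝕜}
    (hA : A.IsHermitian) (hB : B.IsHermitian) (f g : ℝ → ℝ) (G : Matrix m n 𝕜) :
    RCLike.re (trace (cfc f A * (G * cfc g B * Gᴴ))) =
      ∑ i, ∑ j, f (hA.eigenvalues i) * g (hB.eigenvalues j) *
        ‖eigenbasisMatrix hA hB G i j‖ ^ 2 := by
  rw [← re_trace_diagonal_mul_mul_diagonal_mul_conjTranspose, hA.cfc_eq, hB.cfc_eq,
    IsHermitian.cfc, IsHermitian.cfc, Unitary.conjStarAlgAut_apply, Unitary.conjStarAlgAut_apply]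
  simp only [eigenbasisMatrix, conjTranspose_mul, conjTranspose_conjTranspose,
    star_eq_conjTranspose, Matrix.mul_assoc]
  rw [trace_mul_comm]
  simp only [Matrix.mul_assoc]
  rfl

theorem sum_eigenvalues_mul_norm_sq_left {A : Matrix m m 𝕜} {B : Matrix n n 𝕜}
    (hA : A.IsHermitian) (hB : B.IsHermitian) (G : Matrix m n 𝕜) :
    ∑ i, ∑ j, hA.eigenvalues i * ‖eigenbasisMatrix hA hB G i j‖ ^ 2 =
      RCLike.re (trace (Gᴴ * A * G)) := by
  have := re_trace_cfc_mul_mul_cfc_mul_conjTranspose hA hB id (fun _ ↦ 1) G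
  rw [cfc_id ℝ A, cfc_const_one ℝ B, Matrix.mul_one, trace_mul_comm, Matrix.mul_assoc,
    trace_mul_comm] at this
  simpa only [id, mul_one] using this.symm

theorem sum_eigenvalues_mul_norm_sq_right {A : Matrix m m 𝕜} {B : Matrix n n 𝕜}
    (hA : A.IsHermitian) (hB : B.IsHermitian) (G : Matrix m n 𝕜) :
    ∑ i, ∑ j, hB.eigenvalues j * ‖eigenbasisMatrix hA hB G i j‖ ^ 2 =
      RCLike.re (trace (G * B * Gᴴ)) := by
  have := re_trace_cfc_mul_mul_cfc_mul_conjTranspose hA hB (fun _ ↦ 1) id G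
  rw [cfc_id ℝ B, cfc_const_one ℝ A, Matrix.one_mul] at this
  simpa only [id, one_mul] using this.symm

omit [DecidableEq m] in
theorem re_trace_mul_nonneg {A B : Matrix m m 𝕜} (hA : A.PosSemidef) (hB : B.PosSemidef) :
    0 ≤ RCLike.re (trace (A * B)) := by
  classical
  have := re_trace_cfc_mul_mul_cfc_mul_conjTranspose hA.1 hB.1 id id 1
  rw [cfc_id ℝ A, cfc_id ℝ B, Matrix.one_mul, conjTranspose_one, Matrix.mul_one] at this
  rw [this]
  exact Finset.sum_nonneg fun i _ ↦ Finset.sum_nonneg fun j _ ↦ mul_nonneg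
    (mul_nonneg (hA.eigenvalues_nonneg i) (hB.eigenvalues_nonneg j)) (sq_nonneg _)

omit [DecidableEq m] in
theorem re_trace_mul_mul_conjTranspose_le {G : Matrix m n 𝕜} {B : Matrix n n 𝕜} (hG : Gᴴ * G ≤ 1)
    (hB : B.PosSemidef) : RCLike.re (trace (G * B * Gᴴ)) ≤ RCLike.re (trace B) := by
  have := re_trace_mul_nonneg (Matrix.le_iff.mp hG) hB
  rw [Matrix.sub_mul, Matrix.one_mul, trace_sub, map_sub, Matrix.mul_assoc,
    trace_mul_comm Gᴴ] at this
  exact sub_nonneg.mp this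

theorem re_trace_diagonal_mul_mul_diagonal (e : n → ℝ) (M : Matrix n n 𝕜) :
    RCLike.re (trace (diagonal (fun k ↦ (e k : 𝕜)) * M * diagonal (fun k ↦ (e k : 𝕜)))) =
      ∑ k, RCLike.re (M k k) * e k ^ 2 := by
  simp only [trace, diag_apply, mul_diagonal, diagonal_mul, map_sum]
  refine Finset.sum_congr rfl fun k _ ↦ ?_
  rw [RCLike.re_mul_ofReal, RCLike.re_ofReal_mul]
  ring

omit [DecidableEq m] in
theorem re_trace_mul_diagonal_conjTranspose_mul_mul (A : Matrix m m 𝕜) (G : Matrix m n 𝕜)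
    (e : n → ℝ) :
    RCLike.re (trace ((G * diagonal (fun k ↦ (e k : 𝕜)))ᴴ * A *
        (G * diagonal (fun k ↦ (e k : 𝕜))))) =
      ∑ k, RCLike.re ((Gᴴ * A * G) k k) * e k ^ 2 := by
  rw [← re_trace_diagonal_mul_mul_diagonal, conjTranspose_mul, conjTranspose_diagonal_ofReal]
  simp only [Matrix.mul_assoc]

omit [DecidableEq m] in
theorem re_trace_mul_diagonal_mul_mul_conjTranspose_le {B : Matrix n n 𝕜} (hB : B.PosSemidef)
    {G : Matrix m n 𝕜} (hG : Gᴴ * G ≤ 1) (e : n → ℝ) :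
    RCLike.re (trace (G * diagonal (fun k ↦ (e k : 𝕜)) * B *
        (G * diagonal (fun k ↦ (e k : 𝕜)))ᴴ)) ≤
      ∑ k, RCLike.re (B k k) * e k ^ 2 := by
  have := re_trace_mul_mul_conjTranspose_le hG
    (hB.conjTranspose_mul_mul_same (diagonal (fun k ↦ (e k : 𝕜))))
  rw [conjTranspose_diagonal_ofReal, re_trace_diagonal_mul_mul_diagonal] at this
  simpa only [conjTranspose_mul, conjTranspose_diagonal_ofReal, Matrix.mul_assoc] using this

omit [DecidableEq m] [Fintype n] [DecidableEq n] in
theorem re_conj_apply_self_nonneg [Finite n] {A : Matrix m m 𝕜} (hA : A.PosSemidef)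
    (G : Matrix m n 𝕜) (k : n) : 0 ≤ RCLike.re ((Gᴴ * A * G) k k) :=
  (RCLike.nonneg_iff.mp (hA.conjTranspose_mul_mul_same G).diag_nonneg).1

/- Split `G = G * E + G * F` with `E + F = 1` diagonal: in the eigenbases the variational inequality
for the parallel sum applies entrywise, and `E` is chosen so that it is sharp on the right. -/
theorem sum_parallelSum_eigenvalues_mul_norm_sq_le {A : Matrix m m 𝕜} {B : Matrix n n 𝕜}
    (hA : A.PosSemidef) (hB : B.PosSemidef) {G : Matrix m n 𝕜} (hG : Gᴴ * G ≤ 1) {c : ℝ}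
    (hc : 0 ≤ c) :
    ∑ i, ∑ j, parallelSum (hA.1.eigenvalues i) (c * hB.1.eigenvalues j) *
        ‖eigenbasisMatrix hA.1 hB.1 G i j‖ ^ 2 ≤
      ∑ k, parallelSum (RCLike.re ((Gᴴ * A * G) k k)) (c * RCLike.re (B k k)) := by
  set α : n → ℝ := fun k ↦ RCLike.re ((Gᴴ * A * G) k k)
  set β : n → ℝ := fun k ↦ RCLike.re (B k k)
  have hα (k) : 0 ≤ α k := re_conj_apply_self_nonneg hA G k
  have hβ (k) : 0 ≤ c * β k := mul_nonneg hc (RCLike.nonneg_iff.mp hB.diag_nonneg).1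
  set e : n → ℝ := fun k ↦ c * β k / (α k + c * β k)
  let E : Matrix n n 𝕜 := diagonal fun k ↦ (e k : 𝕜)
  let F : Matrix n n 𝕜 := diagonal fun k ↦ ((1 - e k : ℝ) : 𝕜)
  have split : eigenbasisMatrix hA.1 hB.1 G =
      eigenbasisMatrix hA.1 hB.1 (G * E) + eigenbasisMatrix hA.1 hB.1 (G * F) := by
    rw [← eigenbasisMatrix_add, ← Matrix.mul_add, diagonal_add]
    simp
  calc _ ≤ ∑ i, ∑ j, (hA.1.eigenvalues i * ‖eigenbasisMatrix hA.1 hB.1 (G * E) i j‖ ^ 2 +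
          c * hB.1.eigenvalues j * ‖eigenbasisMatrix hA.1 hB.1 (G * F) i j‖ ^ 2) := by
        rw [split]
        gcongr with i _ j _
        exact parallelSum_mul_norm_add_sq_le (hA.eigenvalues_nonneg i)
          (mul_nonneg hc (hB.eigenvalues_nonneg j)) _ _
    _ = RCLike.re (trace ((G * E)ᴴ * A * (G * E))) +
          c * RCLike.re (trace (G * F * B * (G * F)ᴴ)) := by
        rw [← sum_eigenvalues_mul_norm_sq_left hA.1 hB.1,
          ← sum_eigenvalues_mul_norm_sq_right hA.1 hB.1]
        simp only [Finset.sum_add_distrib, Finset.mul_sum, mul_assoc]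
    _ ≤ ∑ k, α k * e k ^ 2 + c * ∑ k, β k * (1 - e k) ^ 2 := by
        gcongr
        · exact (re_trace_mul_diagonal_conjTranspose_mul_mul A G e).le
        · exact re_trace_mul_diagonal_mul_mul_conjTranspose_le hB hG fun k ↦ 1 - e k
    _ = ∑ k, parallelSum (α k) (c * β k) := by
        rw [Finset.mul_sum, ← Finset.sum_add_distrib]
        refine Finset.sum_congr rfl fun k _ ↦ ?_
        rw [parallelSum_eq_weighted_sq_add_sq (hα k) (hβ k), mul_assoc c]

theorem re_trace_rpow_mul_conj_rpow_le_sum {A : Matrix m m 𝕜} {B : Matrix n n 𝕜}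
    (hA : A.PosSemidef) (hB : B.PosSemidef) {G : Matrix m n 𝕜} (hG : Gᴴ * G ≤ 1) {s : ℝ}
    (hs : s ∈ Set.Icc 0 1) :
    RCLike.re (trace (A ^ (1 - s) * (G * B ^ s * Gᴴ))) ≤
      ∑ k, RCLike.re ((Gᴴ * A * G) k k) ^ (1 - s) * RCLike.re (B k k) ^ s := by
  obtain rfl | hs0 := hs.1.eq_or_lt
  · refine le_of_eq ?_
    simp only [sub_zero, CFC.rpow_one A hA.nonneg, CFC.rpow_zero B hB.nonneg, Matrix.mul_one,
      Real.rpow_one, Real.rpow_zero, mul_one]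
    rw [← Matrix.mul_assoc, trace_mul_comm, ← Matrix.mul_assoc, trace, map_sum]
    rfl
  obtain rfl | hs1 := hs.2.eq_or_lt
  · refine (le_of_eq ?_).trans ((re_trace_mul_mul_conjTranspose_le hG hB).trans_eq ?_)
    · rw [sub_self, CFC.rpow_zero A hA.nonneg, CFC.rpow_one B hB.nonneg, Matrix.one_mul]
    · simp only [sub_self, Real.rpow_zero, Real.rpow_one, one_mul, trace, diag_apply, map_sum]
  rw [CFC.rpow_eq_cfc_real hA.nonneg, CFC.rpow_eq_cfc_real hB.nonneg,
    re_trace_cfc_mul_mul_cfc_mul_conjTranspose hA.1 hB.1, ← Fintype.sum_prod_type']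
  refine sum_rpow_mul_rpow_le_of_sum_parallelSum_le ⟨hs0, hs1⟩
    (fun _ ↦ hA.eigenvalues_nonneg _) (fun _ ↦ hB.eigenvalues_nonneg _)
    (re_conj_apply_self_nonneg hA G) (fun _ ↦ (RCLike.nonneg_iff.mp hB.diag_nonneg).1) fun c hc ↦ ?_
  rw [Fintype.sum_prod_type]
  exact sum_parallelSum_eigenvalues_mul_norm_sq_le hA hB hG hc

omit [Fintype n] in
theorem re_conj_rpow_apply_self_le {A : Matrix m m 𝕜} (hA : A.PosSemidef) {G : Matrix m n 𝕜}
    (hG : Gᴴ * G ≤ 1) {p : ℝ} (hp : p ∈ Set.Icc 0 1) (k : n) :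
    RCLike.re ((Gᴴ * A ^ p * G) k k) ≤ RCLike.re ((Gᴴ * A * G) k k) ^ p := by
  set g : Matrix m Unit 𝕜 := G.submatrix id fun _ ↦ k
  have conj_g (M : Matrix m m 𝕜) : gᴴ * M * g = (Gᴴ * M * G).submatrix (fun _ ↦ k) fun _ ↦ k := rfl
  have hg : gᴴ * g ≤ 1 := by
    have := (Matrix.le_iff.mp hG).submatrix fun _ : Unit ↦ k
    rw [Matrix.le_iff]
    convert this using 1
    ext
    simp [g, Matrix.mul_apply]
  have := re_trace_rpow_mul_conj_rpow_le_sum hA PosSemidef.one hg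
    (s := 1 - p) ⟨sub_nonneg.mpr hp.2, sub_le_self 1 hp.1⟩
  rw [CFC.one_rpow, Matrix.mul_one, ← Matrix.mul_assoc, trace_mul_comm, ← Matrix.mul_assoc,
    sub_sub_cancel, conj_g, conj_g] at this
  simpa [trace] using this

theorem unitary_conj_rpow {Z : Matrix n n 𝕜} (hZ : Z.PosSemidef) (U : unitary (Matrix n n 𝕜))
    (p : ℝ) :
    ((U : Matrix n n 𝕜)ᴴ * Z * (U : Matrix n n 𝕜)) ^ p =
      (U : Matrix n n 𝕜)ᴴ * Z ^ p * (U : Matrix n n 𝕜) := by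
  let φ := Unitary.conjStarAlgAut 𝕜 (Matrix n n 𝕜) (star U)
  have φ_apply (M) : φ M = (U : Matrix n n 𝕜)ᴴ * M * (U : Matrix n n 𝕜) :=
    Unitary.conjStarAlgAut_star_apply U M
  have hφ : Continuous φ := by
    simp only [funext φ_apply]
    fun_prop
  have hφZ : 0 ≤ φ Z := by
    rw [φ_apply]
    exact star_left_conjugate_nonneg hZ.nonneg _
  rw [← φ_apply, ← φ_apply, CFC.rpow_eq_cfc_real hZ.nonneg, CFC.rpow_eq_cfc_real hφZ]
  exact (StarAlgHomClass.map_cfc φ _ Z (Z.finite_real_spectrum.continuousOn _)).symm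

theorem re_trace_mul_cfc {B : Matrix n n 𝕜} (hB : B.IsHermitian) (g : ℝ → ℝ) (M : Matrix n n 𝕜) :
    RCLike.re (trace (M * cfc g B)) =
      ∑ k, RCLike.re (((hB.eigenvectorUnitary : Matrix n n 𝕜)ᴴ * M * hB.eigenvectorUnitary) k k) *
        g (hB.eigenvalues k) := by
  rw [hB.cfc_eq, IsHermitian.cfc, Unitary.conjStarAlgAut_apply, ← Matrix.mul_assoc, trace_mul_comm,
    ← Matrix.mul_assoc, ← Matrix.mul_assoc, star_eq_conjTranspose, trace, map_sum]
  refine Finset.sum_congr rfl fun k _ ↦ ?_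
  rw [diag_apply, mul_diagonal]
  exact RCLike.re_mul_ofReal _ _

theorem unitary_conjTranspose_mul_self_le_one (U : unitary (Matrix n n 𝕜)) :
    (U : Matrix n n 𝕜)ᴴ * (U : Matrix n n 𝕜) ≤ 1 :=
  (Unitary.coe_star_mul_self U).le

theorem re_trace_rpow_mul_le {A D : Matrix n n 𝕜} (hA : A.PosSemidef) (hD : D.PosSemidef) {s : ℝ}
    (hs : s ∈ Set.Icc 0 1) :
    RCLike.re (trace (A ^ (1 - s) * D)) ≤
      RCLike.re (trace (A * D)) ^ (1 - s) * RCLike.re (trace D) ^ s := by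
  set U := hD.1.eigenvectorUnitary
  set d := hD.1.eigenvalues
  set α : n → ℝ := fun k ↦ RCLike.re (((U : Matrix n n 𝕜)ᴴ * A * U) k k)
  have hd (k) : 0 ≤ d k := hD.eigenvalues_nonneg k
  have hα (k) : 0 ≤ α k := re_conj_apply_self_nonneg hA _ k
  have trace_mul_D (M : Matrix n n 𝕜) : RCLike.re (trace (M * D)) =
      ∑ k, RCLike.re (((U : Matrix n n 𝕜)ᴴ * M * U) k k) * d k := by
    conv_lhs => rw [← cfc_id ℝ D]
    exact re_trace_mul_cfc hD.1 id M
  have trace_D : RCLike.re (trace D) = ∑ k, d k := by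
    simp [hD.1.trace_eq_sum_eigenvalues, d]
  calc RCLike.re (trace (A ^ (1 - s) * D)) ≤ ∑ k, α k ^ (1 - s) * d k := by
        rw [trace_mul_D]
        gcongr with k
        · exact hd k
        exact re_conj_rpow_apply_self_le hA (unitary_conjTranspose_mul_self_le_one U)
          ⟨sub_nonneg.mpr hs.2, sub_le_self 1 hs.1⟩ k
    _ = ∑ k, (α k * d k) ^ (1 - s) * d k ^ s := by
        refine Finset.sum_congr rfl fun k _ ↦ ?_
        rw [Real.mul_rpow (hα k) (hd k), mul_assoc, ← Real.rpow_add' (hd k) (by simp),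
          sub_add_cancel, Real.rpow_one]
    _ ≤ (∑ k, α k * d k) ^ (1 - s) * (∑ k, d k) ^ s :=
        sum_rpow_mul_rpow_le _ hs (fun k _ ↦ mul_nonneg (hα k) (hd k)) fun k _ ↦ hd k
    _ = _ := by rw [trace_mul_D, trace_D]

theorem one_le_re_conj_apply_self {Z : Matrix n n 𝕜} (hZ : 1 ≤ Z) (U : unitary (Matrix n n 𝕜))
    (k : n) : 1 ≤ RCLike.re (((U : Matrix n n 𝕜)ᴴ * Z * U) k k) := by
  have := re_conj_apply_self_nonneg (Matrix.le_iff.mp hZ) (U : Matrix n n 𝕜) k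
  rw [Matrix.mul_sub, Matrix.sub_mul, Matrix.mul_one, ← star_eq_conjTranspose,
    Unitary.coe_star_mul_self, Matrix.sub_apply, one_apply_eq, map_sub, RCLike.one_re] at this
  exact sub_nonneg.mp this

theorem one_le_eigenvalues {Y : Matrix n n 𝕜} (hY : 1 ≤ Y) (hY' : Y.IsHermitian) (k : n) :
    1 ≤ hY'.eigenvalues k := by
  have := one_le_re_conj_apply_self hY hY'.eigenvectorUnitary k
  rwa [← star_eq_conjTranspose, ← Unitary.conjStarAlgAut_star_apply (S := 𝕜),
    hY'.conjStarAlgAut_star_eigenvectorUnitary, diagonal_apply_eq, Function.comp_apply,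
    RCLike.ofReal_re] at this

omit [DecidableEq m] in
theorem mul_unitary_conjTranspose_mul_self_le_one {G : Matrix m n 𝕜} (hG : Gᴴ * G ≤ 1)
    (U : unitary (Matrix n n 𝕜)) : (G * (U : Matrix n n 𝕜))ᴴ * (G * (U : Matrix n n 𝕜)) ≤ 1 := by
  have := star_left_conjugate_le_conjugate hG (U : Matrix n n 𝕜)
  rw [mul_one, Unitary.coe_star_mul_self] at this
  simpa only [conjTranspose_mul, star_eq_conjTranspose, Matrix.mul_assoc] using this

theorem re_trace_rpow_mul_conj_rpow_le_sum_unitary {A : Matrix m m 𝕜} {B : Matrix n n 𝕜}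
    (hA : A.PosSemidef) (hB : B.PosSemidef) {G : Matrix m n 𝕜} (hG : Gᴴ * G ≤ 1)
    (U : unitary (Matrix n n 𝕜)) {s : ℝ} (hs : s ∈ Set.Icc 0 1) :
    RCLike.re (trace (A ^ (1 - s) * (G * B ^ s * Gᴴ))) ≤
      ∑ k, RCLike.re (((G * (U : Matrix n n 𝕜))ᴴ * A * (G * (U : Matrix n n 𝕜))) k k) ^ (1 - s) *
        RCLike.re (((U : Matrix n n 𝕜)ᴴ * B * (U : Matrix n n 𝕜)) k k) ^ s := by
  refine le_of_eq_of_le ?_ (re_trace_rpow_mul_conj_rpow_le_sum hA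
    (hB.conjTranspose_mul_mul_same (U : Matrix n n 𝕜))
    (mul_unitary_conjTranspose_mul_self_le_one hG U) hs)
  have hU : (U : Matrix n n 𝕜) * (U : Matrix n n 𝕜)ᴴ = 1 := Unitary.coe_mul_star_self U
  have cancel (M : Matrix n m 𝕜) : (U : Matrix n n 𝕜) * ((U : Matrix n n 𝕜)ᴴ * M) = M := by
    rw [← Matrix.mul_assoc, hU, Matrix.one_mul]
  rw [unitary_conj_rpow hB]
  simp only [conjTranspose_mul, Matrix.mul_assoc, cancel]

theorem re_trace_rpow_mul_conj_cfc_le_sum {A : Matrix m m 𝕜} {B : Matrix n n 𝕜}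
    (hA : A.PosSemidef) (hB : B.IsHermitian) {G : Matrix m n 𝕜} (hG : Gᴴ * G ≤ 1) {p : ℝ}
    (hp : p ∈ Set.Icc 0 1) {g : ℝ → ℝ} (hg : ∀ k, 0 ≤ g (hB.eigenvalues k)) :
    RCLike.re (trace (A ^ p * (G * cfc g B * Gᴴ))) ≤
      ∑ k, RCLike.re (((G * (hB.eigenvectorUnitary : Matrix n n 𝕜))ᴴ * A *
        (G * (hB.eigenvectorUnitary : Matrix n n 𝕜))) k k) ^ p * g (hB.eigenvalues k) := by
  rw [← Matrix.mul_assoc, trace_mul_comm, ← Matrix.mul_assoc, ← Matrix.mul_assoc,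
    re_trace_mul_cfc hB]
  gcongr with k
  · exact hg k
  have := re_conj_rpow_apply_self_le hA
    (mul_unitary_conjTranspose_mul_self_le_one hG hB.eigenvectorUnitary) hp k
  simpa only [conjTranspose_mul, Matrix.mul_assoc] using this

omit [DecidableEq m] in
theorem sum_re_unitary_conj_apply_self (A : Matrix m m 𝕜) (G : Matrix m n 𝕜)
    (U : unitary (Matrix n n 𝕜)) :
    ∑ k, RCLike.re (((G * (U : Matrix n n 𝕜))ᴴ * A * (G * (U : Matrix n n 𝕜))) k k) =
      RCLike.re (trace (A * (G * Gᴴ))) := by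
  have hU : (U : Matrix n n 𝕜) * (U : Matrix n n 𝕜)ᴴ = 1 := Unitary.coe_mul_star_self U
  calc _ = RCLike.re (trace ((G * (U : Matrix n n 𝕜))ᴴ * A * (G * (U : Matrix n n 𝕜)))) :=
        (map_sum RCLike.re _ _).symm
    _ = _ := by
        rw [trace_mul_comm, ← Matrix.mul_assoc, trace_mul_comm, conjTranspose_mul,
          Matrix.mul_assoc G, ← Matrix.mul_assoc (U : Matrix n n 𝕜), hU, Matrix.one_mul]

theorem rpow_sub_one_eq_cfc {A : Matrix n n 𝕜} (hA : A.PosSemidef) (s : ℝ) :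
    A ^ s - 1 = cfc (fun x : ℝ ↦ x ^ s - 1) A := by
  rw [CFC.rpow_eq_cfc_real hA.nonneg, cfc_sub _ _ A (A.finite_real_spectrum.continuousOn _),
    cfc_const_one ℝ A]

/- In an eigenbasis of `Y`, with `y`, `z`, `α` the diagonals of `Y`, `Z`, `Hᴴ * X * H`, the
left-hand side is at most `∑ α ^ (1 - s) * (y ^ s + z ^ s - 1)`, which is a scalar expression. -/
theorem re_trace_rpow_mul_conj_rpow_add_rpow_sub_one_le {X : Matrix m m 𝕜} {Y Z : Matrix n n 𝕜}
    {H : Matrix m n 𝕜} (hX : X.PosSemidef) (hY : 1 ≤ Y) (hZ : 1 ≤ Z) (hH : Hᴴ * H ≤ 1) {s : ℝ}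
    (hs : s ∈ Set.Icc 0 1) :
    RCLike.re (trace (X ^ (1 - s) * (H * (Y ^ s + Z ^ s - 1) * Hᴴ))) ≤
      RCLike.re (trace (X * (H * Hᴴ))) ^ (1 - s) * RCLike.re (trace (Y * Z)) ^ s := by
  have hY0 : Y.PosSemidef := Matrix.nonneg_iff_posSemidef.mp (zero_le_one.trans hY)
  have hZ0 : Z.PosSemidef := Matrix.nonneg_iff_posSemidef.mp (zero_le_one.trans hZ)
  let U : unitary (Matrix n n 𝕜) := hY0.1.eigenvectorUnitary
  let α : n → ℝ := fun k ↦ RCLike.re (((H * (U : Matrix n n 𝕜))ᴴ * X * (H * U.1)) k k)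
  let y : n → ℝ := hY0.1.eigenvalues
  let z : n → ℝ := fun k ↦ RCLike.re (((U : Matrix n n 𝕜)ᴴ * Z * U) k k)
  have hα (k) : 0 ≤ α k := re_conj_apply_self_nonneg hX _ k
  have hy (k) : 1 ≤ y k := one_le_eigenvalues hY hY0.1 k
  have hz (k) : 1 ≤ z k := one_le_re_conj_apply_self hZ U k
  have sum_y_mul_z : ∑ k, y k * z k = RCLike.re (trace (Y * Z)) := by
    rw [trace_mul_comm]
    conv_rhs => rw [← cfc_id ℝ Y, re_trace_mul_cfc hY0.1 id Z]
    exact Finset.sum_congr rfl fun k _ ↦ mul_comm _ _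
  calc _ = RCLike.re (trace (X ^ (1 - s) * (H * (Y ^ s - 1) * Hᴴ))) +
        RCLike.re (trace (X ^ (1 - s) * (H * Z ^ s * Hᴴ))) := by
        rw [← map_add, ← trace_add, ← Matrix.mul_add, ← Matrix.add_mul, ← Matrix.mul_add,
          sub_add_eq_add_sub]
    _ ≤ ∑ k, α k ^ (1 - s) * (y k ^ s - 1) + ∑ k, α k ^ (1 - s) * z k ^ s := by
        rw [rpow_sub_one_eq_cfc hY0]
        exact add_le_add
          (re_trace_rpow_mul_conj_cfc_le_sum hX hY0.1 hH ⟨sub_nonneg.mpr hs.2, sub_le_self 1 hs.1⟩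
            fun k ↦ sub_nonneg.mpr (Real.one_le_rpow (hy k) hs.1))
          (re_trace_rpow_mul_conj_rpow_le_sum_unitary hX hZ0 hH U hs)
    _ = ∑ k, α k ^ (1 - s) * (y k ^ s + z k ^ s - 1) := by
        rw [← Finset.sum_add_distrib]
        exact Finset.sum_congr rfl fun k _ ↦ by ring
    _ ≤ (∑ k, α k) ^ (1 - s) * (∑ k, y k * z k) ^ s :=
        sum_rpow_mul_rpow_add_rpow_sub_one_le _ hs (fun k _ ↦ hα k) (fun k _ ↦ hy k) fun k _ ↦ hz k
    _ = _ := by rw [sum_re_unitary_conj_apply_self, sum_y_mul_z]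

theorem mul_conjTranspose_self_le_one {G : Matrix m n 𝕜} (hG : Gᴴ * G ≤ 1) : G * Gᴴ ≤ 1 := by
  let : Invertible (1 : Matrix m m 𝕜) := invertibleOne
  let : Invertible (1 : Matrix n n 𝕜) := invertibleOne
  have h₁ := PosDef.fromBlocks₁₁ (A := (1 : Matrix m m 𝕜)) G 1 PosDef.one
  have h₂ := PosDef.fromBlocks₂₂ (D := (1 : Matrix n n 𝕜)) 1 G PosDef.one
  simp only [inv_one, Matrix.mul_one] at h₁ h₂
  exact Matrix.le_iff.mpr (h₂.mp (h₁.mpr (Matrix.le_iff.mp hG)))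

theorem re_trace_rpow_mul_one_sub_add_le {X : Matrix m m 𝕜} {Y Z : Matrix n n 𝕜}
    {H : Matrix m n 𝕜} (hX : X.PosSemidef) (hY : 1 ≤ Y) (hZ : 1 ≤ Z) (hH : Hᴴ * H ≤ 1) {s : ℝ}
    (hs : s ∈ Set.Icc 0 1) :
    RCLike.re (trace (X ^ (1 - s) * (1 - H * Hᴴ))) +
        RCLike.re (trace (X ^ (1 - s) * (H * (Y ^ s + Z ^ s - 1) * Hᴴ))) ≤
      RCLike.re (trace X) ^ (1 - s) *
        (RCLike.re (trace (1 - H * Hᴴ)) + RCLike.re (trace (Y * Z))) ^ s := by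
  have hD : (1 - H * Hᴴ).PosSemidef := Matrix.le_iff.mp (mul_conjTranspose_self_le_one hH)
  have hY0 : Y.PosSemidef := Matrix.nonneg_iff_posSemidef.mp (zero_le_one.trans hY)
  have hZ0 : Z.PosSemidef := Matrix.nonneg_iff_posSemidef.mp (zero_le_one.trans hZ)
  have trace_X : RCLike.re (trace X) =
      RCLike.re (trace (X * (1 - H * Hᴴ))) + RCLike.re (trace (X * (H * Hᴴ))) := by
    rw [← map_add, ← trace_add, ← Matrix.mul_add, sub_add_cancel, Matrix.mul_one]
  rw [trace_X]
  exact (add_le_add (re_trace_rpow_mul_le hX hD hs)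
    (re_trace_rpow_mul_conj_rpow_add_rpow_sub_one_le hX hY hZ hH hs)).trans
    (rpow_mul_rpow_add_rpow_mul_rpow_le hs (re_trace_mul_nonneg hX hD)
      (RCLike.nonneg_iff.mp hD.trace_nonneg).1
      (re_trace_mul_nonneg hX (posSemidef_self_mul_conjTranspose H)) (re_trace_mul_nonneg hY0 hZ0))

theorem rpow_neg_half_mul_mul_rpow_neg_half {Y : Matrix n n 𝕜} (hY : Y.PosDef) :
    Y ^ (-(1 / 2) : ℝ) * Y * Y ^ (-(1 / 2) : ℝ) = 1 := by
  have hY0 := hY.posSemidef.nonneg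
  nth_rewrite 2 [← CFC.rpow_one Y hY0]
  rw [← CFC.rpow_add hY.isUnit, ← CFC.rpow_add hY.isUnit, ← CFC.rpow_zero Y hY0]
  norm_num

theorem one_le_rpow_neg_half_conj {X Y : Matrix n n 𝕜} (hY : Y.PosDef) (hYX : Y ≤ X) :
    1 ≤ Y ^ (-(1 / 2) : ℝ) * X * Y ^ (-(1 / 2) : ℝ) := by
  rw [← rpow_neg_half_mul_mul_rpow_neg_half hY]
  exact CFC.rpow_nonneg.isSelfAdjoint.conjugate_le_conjugate hYX

theorem trace_mul_rpow_neg_half_conj {Y : Matrix n n 𝕜} (hY : Y.PosDef) (X : Matrix n n 𝕜) :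
    trace (Y * (Y ^ (-(1 / 2) : ℝ) * X * Y ^ (-(1 / 2) : ℝ))) = trace X := by
  rw [trace_mul_comm, Matrix.mul_assoc, Matrix.mul_assoc, trace_mul_comm, Matrix.mul_assoc,
    rpow_neg_half_mul_mul_rpow_neg_half hY, Matrix.mul_one]

end Pinching

section Tsallis

open scoped MatrixOrder

variable {n : ℕ}

theorem mpow_eq_rpow {A : Matrix (Fin n) (Fin n) ℂ} (hA : A.PosSemidef) (p : ℝ) :
    mpow A p = A ^ p :=
  (CFC.rpow_eq_cfc_real hA.nonneg).symm

theorem mlogq_eq_smul {A : Matrix (Fin n) (Fin n) ℂ} (hA : A.PosSemidef) (q : ℝ) :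
    mlogq q A = (q - 1)⁻¹ • (A ^ (q - 1) - 1) := by
  rw [rpow_sub_one_eq_cfc hA, ← cfc_smul _ _ A (A.finite_real_spectrum.continuousOn _), mlogq]
  exact congrArg (cfc · A) (funext fun x ↦ div_eq_inv_mul _ _)

theorem posSemidef_mpow_mul_mul_mpow {A : Matrix (Fin n) (Fin n) ℂ} (hA : A.PosSemidef)
    (B : Matrix (Fin n) (Fin n) ℂ) (p : ℝ) : (mpow B p * A * mpow B p).PosSemidef := by
  have hB : (mpow B p)ᴴ = mpow B p := cfc_predicate (R := ℝ) _ B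
  simpa only [hB] using hA.conjTranspose_mul_mul_same (mpow B p)

theorem STq_sub_trRe_conj_mul_mlogq {H X Y Z : Matrix (Fin n) (Fin n) ℂ} (hX : X.PosDef)
    (hY : Y.PosSemidef) (hZ : Z.PosSemidef) (q : ℝ) :
    STq H q X Y - trRe (Hᴴ * mpow X (2 - q) * H * mlogq q Z) + trRe (X - Y) =
      (q - 1)⁻¹ * (trRe X - (trRe (mpow X (2 - q) * (1 - H * Hᴴ)) +
        trRe (mpow X (2 - q) * (H * (mpow Y (q - 1) + mpow Z (q - 1) - 1) * Hᴴ)))) := by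
  have trRe_add (M N : Matrix (Fin n) (Fin n) ℂ) : trRe (M + N) = trRe M + trRe N := by
    simp [trRe]
  have trRe_sub (M N : Matrix (Fin n) (Fin n) ℂ) : trRe (M - N) = trRe M - trRe N := by
    simp [trRe]
  have trRe_smul (c : ℝ) (M : Matrix (Fin n) (Fin n) ℂ) : trRe (c • M) = c * trRe M := by
    simp [trRe]
  have trRe_cycle (M : Matrix (Fin n) (Fin n) ℂ) :
      trRe (Hᴴ * X ^ (2 - q) * H * M) = trRe (X ^ (2 - q) * (H * M * Hᴴ)) := by
    rw [trRe, Matrix.mul_assoc, Matrix.mul_assoc, trace_mul_comm, Matrix.mul_assoc, trRe]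
  have trRe_cycle_one : trRe (Hᴴ * X ^ (2 - q) * H) = trRe (X ^ (2 - q) * (H * Hᴴ)) := by
    simpa only [Matrix.mul_one] using trRe_cycle 1
  have hXX : X ^ (2 - q) * X ^ (q - 1) = X := by
    rw [← CFC.rpow_add hX.isUnit, show 2 - q + (q - 1) = 1 by ring,
      CFC.rpow_one X hX.posSemidef.nonneg]
  rw [STq, mlogq_eq_smul hX.posSemidef, mlogq_eq_smul hY, mlogq_eq_smul hZ,
    mpow_eq_rpow hX.posSemidef, mpow_eq_rpow hY, mpow_eq_rpow hZ]
  simp only [Matrix.mul_smul, trRe_add, trRe_sub, trRe_smul, trRe_cycle, trRe_cycle_one,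
    Matrix.mul_sub, Matrix.mul_add, Matrix.sub_mul, Matrix.add_mul, Matrix.mul_one, hXX]
  ring

theorem trRe_mpow_mul_one_sub_add_le {q : ℝ} (hq : q ∈ Set.Icc 1 2)
    {H X Y : Matrix (Fin n) (Fin n) ℂ} (hH : Hᴴ * H ≤ 1) (hY : 1 ≤ Y) (hYX : Y ≤ X) :
    trRe (mpow X (2 - q) * (1 - H * Hᴴ)) +
        trRe (mpow X (2 - q) * (H * (mpow Y (q - 1) +
          mpow (mpow Y (-(1 / 2)) * X * mpow Y (-(1 / 2))) (q - 1) - 1) * Hᴴ)) ≤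
      trRe X ^ (2 - q) * (trRe (1 - H * Hᴴ) + trRe X) ^ (q - 1) := by
  have hX0 : X.PosSemidef := Matrix.nonneg_iff_posSemidef.mp (zero_le_one.trans (hY.trans hYX))
  have hY0 : Y.PosDef := by
    simpa only [sub_add_cancel] using PosDef.posSemidef_add (Matrix.le_iff.mp hY) PosDef.one
  set Z := mpow Y (-(1 / 2)) * X * mpow Y (-(1 / 2)) with hZ
  have hZ0 : Z.PosSemidef := posSemidef_mpow_mul_mul_mpow hX0 Y _
  rw [mpow_eq_rpow hY0.posSemidef] at hZ
  have hZ1 : 1 ≤ Z := hZ ▸ one_le_rpow_neg_half_conj hY0 hYX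
  have trace_YZ : trace (Y * Z) = trace X := hZ ▸ trace_mul_rpow_neg_half_conj hY0 X
  have := re_trace_rpow_mul_one_sub_add_le hX0 hY hZ1 hH
    (s := q - 1) ⟨sub_nonneg.mpr hq.1, by linarith [hq.2]⟩
  rw [trace_YZ, show 1 - (q - 1) = 2 - q by ring] at this
  rwa [mpow_eq_rpow hX0, mpow_eq_rpow hY0.posSemidef, mpow_eq_rpow hZ0]

theorem rpow_mul_add_rpow_eq_add_mul_logq {q γ t : ℝ} (hq : q ≠ 1) (hγ : 0 < γ) (ht : 0 ≤ t) :
    γ ^ (2 - q) * (t + γ) ^ (q - 1) = γ + (q - 1) * (γ * logq q (1 + γ⁻¹ * t)) := by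
  have hq' : q - 1 ≠ 0 := sub_ne_zero.mpr hq
  have factor : t + γ = γ * (1 + γ⁻¹ * t) := by
    field_simp
    ring
  calc _ = γ ^ (2 - q + (q - 1)) * (1 + γ⁻¹ * t) ^ (q - 1) := by
        rw [factor, Real.mul_rpow hγ.le (by positivity), ← mul_assoc, ← Real.rpow_add hγ]
    _ = γ * (1 + γ⁻¹ * t) ^ (q - 1) := by
        rw [show 2 - q + (q - 1) = 1 by ring, Real.rpow_one]
    _ = _ := by
        rw [logq, mul_left_comm, mul_div_cancel₀ _ hq']
        ring

end Tsallis

/-- Lower bound for the reduced Tsallis relative entropy when I ≤ Y ≤ X, with γ = Tr X. -/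
theorem stmt17 {n : ℕ} (q : ℝ) (hq : q ∈ Set.Ioc (1 : ℝ) 2)
    (H X Y : Matrix (Fin n) (Fin n) ℂ) (hH : (1 - Hᴴ * H).PosSemidef)
    (hX : X.PosDef) (hY : Y.PosDef)
    (hIY : (Y - 1).PosSemidef) (hYX : (X - Y).PosSemidef) :
    STq H q X Y ≥
      trRe (Hᴴ * mpow X (2 - q) * H
          * mlogq q (mpow Y (-(1 / 2 : ℝ)) * X * mpow Y (-(1 / 2 : ℝ))))
        - trRe (X - Y)
        - trRe X * logq q (1 + (trRe X)⁻¹ * trRe (1 - H * Hᴴ)) := by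
  obtain _ | _ := isEmpty_or_nonempty (Fin n)
  · simp [STq, trRe, trace]
  have hHH := mul_conjTranspose_self_le_one (Matrix.le_iff.mpr hH)
  have hγ : 0 < trRe X := (RCLike.pos_iff.mp hX.trace_pos).1
  have ht : 0 ≤ trRe (1 - H * Hᴴ) :=
    (RCLike.nonneg_iff.mp (Matrix.le_iff.mp hHH).trace_nonneg).1
  have hq' : 0 < q - 1 := sub_pos.mpr hq.1
  have trace_bound := trRe_mpow_mul_one_sub_add_le ⟨hq.1.le, hq.2⟩ (Matrix.le_iff.mpr hH)
    (Matrix.le_iff.mpr hIY) (Matrix.le_iff.mpr hYX)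
  rw [rpow_mul_add_rpow_eq_add_mul_logq hq.1.ne' hγ ht, ← sub_le_iff_le_add'] at trace_bound
  have expand := STq_sub_trRe_conj_mul_mlogq (H := H) hX hY.posSemidef
    (posSemidef_mpow_mul_mul_mpow hX.posSemidef Y (-(1 / 2))) q
  have := (inv_mul_le_iff₀ hq').mpr trace_bound
  linarith
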